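/- arXiv:2303.16995 — 3 statements merged into one kernel-verified Lean document; each statement's English description precedes it below -/
import Mathlib

section
/- For every n-coloring χ of the pairs of [N] with N = 2^{5^3 · 6 · log n} (colors in {1,...,n}, n ≥ 2), there exists a non-increasing triple, i.e., u < v < w with χ(u,v) = χ(u,w) ≥ χ(v,w) or χ(u,v) ≥ χ(v,w) = χ(u,w). Equivalently, f(3; n) ≤ 2^{750 log n} = n^{750}. -/
/-- A triple `u < v < w` is non-increasing with respect to `χ` if
`χ(u,v) = χ(u,w) ≥ χ(v,w)` or `χ(u,v) ≥ χ(v,w) = χ(u,w)`. -/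
def NonIncTriple (χ : ℕ → ℕ → ℕ) (u v w : ℕ) : Prop :=
  (χ u v = χ u w ∧ χ v w ≤ χ u w) ∨ (χ v w = χ u w ∧ χ v w ≤ χ u v)

/-- Between fixed `u < w`, at most `n^2` vertices `v` satisfy `χ(v,w) ≤ χ(u,v)`. -/
theorem bad_card (n N : ℕ) (χ : ℕ → ℕ → ℕ) (hχ : ∀ u v, χ u v ∈ Finset.Icc 1 n)
    (h : ∀ u v w, 1 ≤ u → u < v → v < w → w ≤ N → ¬ NonIncTriple χ u v w)
    (B : Finset ℕ) (u w : ℕ) (hu : 1 ≤ u) (hw : w ≤ N) (hB : ∀ v ∈ B, u < v ∧ v < w) :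
    (B.filter (fun v => χ v w ≤ χ u v)).card ≤ n ^ 2 := by
  have hkey : ∀ v v', u < v → v < v' → v' < w → χ v w ≤ χ u v → χ u v = χ u v' →
      χ v w = χ v' w → False := by
    intro v v' h1 h2 h3 h4 h5 h6
    have a := h u v v' hu h1 h2 (by omega)
    have b := h v v' w (by omega) h2 h3 hw
    unfold NonIncTriple at a b
    omega
  have hc : ((Finset.Icc 1 n) ×ˢ (Finset.Icc 1 n)).card = n ^ 2 := by
    simp [Finset.card_product, sq]
  rw [← hc]
  apply Finset.card_le_card_of_injOn (fun v => (χ u v, χ v w))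
  · intro v _
    exact Finset.mem_coe.2 (Finset.mem_product.2 ⟨hχ _ _, hχ _ _⟩)
  · intro v hv v' hv' he
    have hv := Finset.mem_filter.1 (Finset.mem_coe.1 hv)
    have hv' := Finset.mem_filter.1 (Finset.mem_coe.1 hv')
    have e1 : χ u v = χ u v' := congrArg Prod.fst he
    have e2 : χ v w = χ v' w := congrArg Prod.snd he
    have b1 := hB v hv.1
    have b2 := hB v' hv'.1
    rcases lt_trichotomy v v' with hl | hl | hl
    · exact (hkey v v' b1.1 hl b2.2 hv.2 e1 e2).elim
    · exact hl
    · exact (hkey v' v b2.1 hl b1.2 hv'.2 e1.symm e2.symm).elim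

theorem f_three_bound (n N : ℕ) (hn : 2 ≤ n) (hN : n ^ 750 ≤ N)
    (χ : ℕ → ℕ → ℕ) (hχ : ∀ u v, χ u v ∈ Finset.Icc 1 n) :
    ∃ u v w, u ∈ Finset.Icc 1 N ∧ v ∈ Finset.Icc 1 N ∧ w ∈ Finset.Icc 1 N ∧
      u < v ∧ v < w ∧ NonIncTriple χ u v w := by
  by_contra hcon
  have h : ∀ u v w, 1 ≤ u → u < v → v < w → w ≤ N → ¬ NonIncTriple χ u v w := by
    intro u v w h1 h2 h3 h4 h5
    exact hcon ⟨u, v, w, by simp; omega, by simp; omega, by simp; omega, h2, h3, h5⟩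
  obtain ⟨M, hM⟩ : ∃ M, M = n ^ 3 + 1 := ⟨_, rfl⟩
  have hNM : (n + 2) * M ≤ N := by
    refine le_trans ?_ hN
    have h6 : n ^ 6 ≤ n ^ 750 := Nat.pow_le_pow_right (by omega) (by norm_num)
    refine le_trans ?_ h6
    have h1 : n + 2 ≤ n ^ 2 := by nlinarith
    have h3 : 1 ≤ n ^ 3 := Nat.one_le_pow _ _ (by omega)
    have h2 : M ≤ n ^ 4 := by
      rw [hM, pow_succ n 3]; nlinarith
    calc (n + 2) * M ≤ n ^ 2 * n ^ 4 := Nat.mul_le_mul h1 h2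
      _ = n ^ 6 := by ring
  let B : ℕ → Finset ℕ := fun i => Finset.Ico (i * M + 1) ((i + 1) * M + 1)
  have hBc : ∀ i, (B i).card = M := by
    intro i
    simp only [B, Nat.card_Ico]
    rw [Nat.add_mul]; omega
  have hBm : ∀ i v, v ∈ B i ↔ i * M + 1 ≤ v ∧ v ≤ (i + 1) * M := by
    intro i v
    simp only [B, Finset.mem_Ico]; omega
  let D : ℕ → Finset (ℕ × ℕ) := fun i =>
    (B i ×ˢ B (i + 1)).filter (fun p => χ p.1 p.2 ≤ i)
  have hD : ∀ i, i ≤ n → (D i).card ≤ i * (M * n ^ 2) := by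
    intro i
    induction i with
    | zero =>
      intro _
      have : D 0 = ∅ := by
        apply Finset.filter_eq_empty_iff.2
        intro p _
        have := Finset.mem_Icc.1 (hχ p.1 p.2)
        omega
      simp [this]
    | succ i ih =>
      intro hi
      have ih := ih (by omega)
      let X : Finset (ℕ × ℕ × ℕ) :=
        (D i ×ˢ B (i + 2)).image (fun q => (q.1.1, q.1.2, q.2))
      let Y : Finset (ℕ × ℕ × ℕ) :=
        (B i ×ˢ B (i + 2)).biUnion (fun q =>
          ((B (i + 1)).filter (fun v => χ v q.2 ≤ χ q.1 v)).image (fun v => (q.1, v, q.2)))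
      have hX : X.card ≤ (D i).card * M := by
        refine le_trans Finset.card_image_le ?_
        rw [Finset.card_product, hBc]
      have hY : Y.card ≤ M * M * n ^ 2 := by
        have : (B i ×ˢ B (i + 2)).card = M * M := by
          rw [Finset.card_product, hBc, hBc]
        rw [← this]
        apply Finset.card_biUnion_le_card_mul
        rintro ⟨u, w⟩ hq
        obtain ⟨hu, hw⟩ := Finset.mem_product.1 hq
        refine le_trans Finset.card_image_le ?_
        have hu := (hBm _ _).1 hu
        have hw := (hBm _ _).1 hw
        simp only at hu hw
        have hle : (i + 2 + 1) * M ≤ (n + 2) * M := Nat.mul_le_mul_right _ (by omega)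
        apply bad_card n N χ hχ h _ u w (by omega) (by omega)
        intro v hv
        have hv := (hBm _ _).1 hv
        constructor
        · omega
        · have : i + 1 + 1 = i + 2 := rfl
          rw [this] at hv
          omega
      have hsub : B i ×ˢ D (i + 1) ⊆ X ∪ Y := by
        rintro ⟨u, v, w⟩ hq
        obtain ⟨hu, hvw⟩ := Finset.mem_product.1 hq
        obtain ⟨hvw, hc⟩ := Finset.mem_filter.1 hvw
        obtain ⟨hv, hw⟩ := Finset.mem_product.1 hvw
        simp only at hu hv hw hc
        rw [Finset.mem_union]
        by_cases hb : χ u v ≤ i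
        · left
          refine Finset.mem_image.2 ⟨((u, v), w), ?_, rfl⟩
          exact Finset.mem_product.2 ⟨Finset.mem_filter.2
            ⟨Finset.mem_product.2 ⟨hu, hv⟩, hb⟩, hw⟩
        · right
          refine Finset.mem_biUnion.2 ⟨(u, w), Finset.mem_product.2 ⟨hu, hw⟩, ?_⟩
          refine Finset.mem_image.2 ⟨v, Finset.mem_filter.2 ⟨hv, ?_⟩, rfl⟩
          simp only
          omega
      have h1 := (Finset.card_le_card hsub).trans (Finset.card_union_le _ _)
      rw [Finset.card_product, hBc] at h1
      have hMpos : 0 < M := by omega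
      refine Nat.le_of_mul_le_mul_left ?_ hMpos
      calc M * (D (i + 1)).card ≤ X.card + Y.card := h1
        _ ≤ (D i).card * M + M * M * n ^ 2 := Nat.add_le_add hX hY
        _ ≤ (i * (M * n ^ 2)) * M + M * M * n ^ 2 :=
            Nat.add_le_add_right (Nat.mul_le_mul_right _ ih) _
        _ = M * ((i + 1) * (M * n ^ 2)) := by ring
  have hfin := hD n le_rfl
  have hall : D n = B n ×ˢ B (n + 1) := by
    apply Finset.filter_true_of_mem
    intro p _
    exact (Finset.mem_Icc.1 (hχ p.1 p.2)).2
  rw [hall, Finset.card_product, hBc, hBc] at hfin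
  have h2 : M * M ≤ M * n ^ 3 := hfin.trans (le_of_eq (by ring))
  have h3 := Nat.le_of_mul_le_mul_left h2 (by omega)
  omega
end

section
/- For s ≥ 3 and n ≥ 2, every n-coloring of the pairs of [N] with N ≥ 2^{5^s · s! · (log n)^{s-2}} contains a non-increasing set of size s; that is, f(s; n) ≤ 2^{5^s s! (log n)^{s-2}}. -/
/-- All triples of `S` are non-increasing. -/
def NISet (χ : ℕ → ℕ → ℕ) (S : Finset ℕ) : Prop :=
  ∀ u ∈ S, ∀ v ∈ S, ∀ w ∈ S, u < v → v < w → NonIncTriple χ u v w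

/-- `T` has no non-increasing `p`-set with colours in `[lo, hi)`. -/
def FreeOf (χ : ℕ → ℕ → ℕ) (p lo hi : ℕ) (T : Finset ℕ) : Prop :=
  ∀ S ⊆ T, S.card = p → NISet χ S →
    (∀ u ∈ S, ∀ v ∈ S, u < v → lo ≤ χ u v ∧ χ u v < hi) → False

/-- number of pairs of `T` with colour in `[lo, hi)`. -/
def cnt (χ : ℕ → ℕ → ℕ) (lo hi : ℕ) (T : Finset ℕ) : ℕ :=
  ((T ×ˢ T).filter (fun x => x.1 < x.2 ∧ lo ≤ χ x.1 x.2 ∧ χ x.1 x.2 < hi)).card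

def DenseIn (χ : ℕ → ℕ → ℕ) (e lo hi : ℕ) (T : Finset ℕ) : Prop :=
  T.Nonempty ∧ T.card ^ 2 ≤ 2 ^ e * cnt χ lo hi T

/-- The colours `[lo,hi)` can be removed at total cost `2^k`, paying only when they are dense. -/
def Kill (χ : ℕ → ℕ → ℕ) (e lo hi : ℕ) (k : ℕ) (T : Finset ℕ) : Prop :=
  ∀ T' ⊆ T, DenseIn χ e lo hi T' →
    ∃ k', ∃ _h : k' < k, ∃ T'' ⊆ T', T'.card ≤ 2 ^ (k - k') * T''.card ∧ Kill χ e lo hi k' T''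
termination_by k

/-- Every subset has a large subset without colours in `[lo,hi)`. -/
def SoftDead (χ : ℕ → ℕ → ℕ) (l lo hi : ℕ) (T : Finset ℕ) : Prop :=
  ∀ T' ⊆ T, ∃ T'' ⊆ T', T'.card ≤ 2 ^ l * T''.card ∧
    ∀ u ∈ T'', ∀ v ∈ T'', u < v → ¬ (lo ≤ χ u v ∧ χ u v < hi)

section
variable {χ : ℕ → ℕ → ℕ}

lemma FreeOf.mono {p lo hi : ℕ} {T T' : Finset ℕ} (h : FreeOf χ p lo hi T) (hT : T' ⊆ T) :
    FreeOf χ p lo hi T' := fun S hS => h S (hS.trans hT)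

lemma SoftDead.mono {l lo hi : ℕ} {T T' : Finset ℕ} (h : SoftDead χ l lo hi T) (hT : T' ⊆ T) :
    SoftDead χ l lo hi T' := fun S hS => h S (hS.trans hT)

lemma Kill.mono {e lo hi k : ℕ} {T T' : Finset ℕ} (h : Kill χ e lo hi k T) (hT : T' ⊆ T) :
    Kill χ e lo hi k T' := by
  rw [Kill] at h ⊢
  exact fun S hS => h S (hS.trans hT)

lemma Kill.mono_k {e lo hi k k2 : ℕ} {T : Finset ℕ} (h : Kill χ e lo hi k T) (hk : k ≤ k2) :
    Kill χ e lo hi k2 T := by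
  rw [Kill] at h ⊢
  intro S hS hd
  obtain ⟨k', h1, T'', h2, h3, h4⟩ := h S hS hd
  refine ⟨k', by omega, T'', h2, h3.trans ?_, h4⟩
  gcongr
  norm_num

lemma cnt_eq_zero {lo hi : ℕ} {T : Finset ℕ}
    (h : ∀ u ∈ T, ∀ v ∈ T, u < v → ¬ (lo ≤ χ u v ∧ χ u v < hi)) : cnt χ lo hi T = 0 := by
  unfold cnt
  rw [Finset.card_eq_zero, Finset.filter_eq_empty_iff]
  rintro ⟨x, y⟩ hx ⟨h1, h2⟩
  rw [Finset.mem_product] at hx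
  exact h x hx.1 y hx.2 h1 h2

lemma kill_of_none {e lo hi k : ℕ} {T : Finset ℕ}
    (h : ∀ u ∈ T, ∀ v ∈ T, u < v → ¬ (lo ≤ χ u v ∧ χ u v < hi)) : Kill χ e lo hi k T := by
  rw [Kill]
  intro T' hT' hd
  exfalso
  obtain ⟨h1, h2⟩ := hd
  rw [cnt_eq_zero (fun u hu v hv => h u (hT' hu) v (hT' hv))] at h2
  have := h1.card_pos
  have : 0 < T'.card ^ 2 := by positivity
  omega

lemma cnt_le_add {lo m m' hi : ℕ} {T : Finset ℕ} (hm : m ≤ m') :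
    cnt χ lo hi T ≤ cnt χ lo m' T + cnt χ m hi T := by
  unfold cnt
  rw [← Finset.card_union_add_card_inter]
  refine le_trans (Finset.card_le_card ?_) (Nat.le_add_right _ _)
  intro x hx
  simp only [Finset.mem_union, Finset.mem_filter] at hx ⊢
  obtain ⟨h1, h2, h3, h4⟩ := hx
  by_cases h : χ x.1 x.2 < m'
  · left; exact ⟨h1, h2, h3, h⟩
  · right; exact ⟨h1, h2, by omega, h4⟩

lemma cnt_fwd {lo hi : ℕ} {T : Finset ℕ} : cnt χ lo hi T =
    ∑ u ∈ T, (T.filter (fun x => u < x ∧ lo ≤ χ u x ∧ χ u x < hi)).card := by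
  unfold cnt
  simp only [Finset.card_filter]
  rw [Finset.sum_product]

lemma cnt_bwd {lo hi : ℕ} {T : Finset ℕ} : cnt χ lo hi T =
    ∑ w ∈ T, (T.filter (fun x => x < w ∧ lo ≤ χ x w ∧ χ x w < hi)).card := by
  unfold cnt
  simp only [Finset.card_filter]
  rw [Finset.sum_product_right]

lemma pop_aux {E : ℕ} {T : Finset ℕ} (hT : T.Nonempty) (g : ℕ → ℕ)
    (h : T.card ^ 2 ≤ 2 ^ E * ∑ u ∈ T, g u) : ∃ u ∈ T, T.card ≤ 2 ^ E * g u := by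
  by_contra! hc
  have : ∑ u ∈ T, 2 ^ E * g u < ∑ u ∈ T, T.card := Finset.sum_lt_sum_of_nonempty hT hc
  rw [← Finset.mul_sum, Finset.sum_const, smul_eq_mul] at this
  nlinarith

lemma pigeon {l lo hi : ℕ} {H : Finset ℕ} (g : ℕ → ℕ) (hg : ∀ x ∈ H, lo ≤ g x ∧ g x < hi)
    (hl : hi - lo ≤ 2 ^ l) (hH : H.Nonempty) :
    ∃ a, lo ≤ a ∧ a < hi ∧ H.card ≤ 2 ^ l * (H.filter (fun x => g x = a)).card := by
  by_contra! hc
  have h1 : H.card = ∑ a ∈ Finset.Ico lo hi, (H.filter (fun x => g x = a)).card :=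
    Finset.card_eq_sum_card_fiberwise (fun x hx => by simpa using hg x hx)
  obtain ⟨x, hx⟩ := hH
  have hne : (Finset.Ico lo hi).Nonempty := ⟨g x, by simpa using hg x hx⟩
  have h2 : ∑ a ∈ Finset.Ico lo hi, 2 ^ l * (H.filter (fun x => g x = a)).card
      < ∑ a ∈ Finset.Ico lo hi, H.card :=
    Finset.sum_lt_sum_of_nonempty hne (fun a ha => by
      rw [Finset.mem_Ico] at ha; exact hc a ha.1 ha.2)
  rw [← Finset.mul_sum, ← h1, Finset.sum_const, smul_eq_mul, Nat.card_Ico] at h2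
  have := Nat.mul_le_mul_right H.card hl
  omega

lemma free_fwd {p lo hi u a : ℕ} {T A : Finset ℕ} (hF : FreeOf χ (p + 1) lo hi T)
    (hu : u ∈ T) (hA : A ⊆ T) (hAu : ∀ x ∈ A, u < x ∧ χ u x = a) (ha : lo ≤ a) (ha' : a < hi) :
    FreeOf χ p lo (a + 1) A := by
  intro S hS hc hNI hcol
  have huS : u ∉ S := fun h => lt_irrefl _ (hAu u (hS h)).1
  refine hF (insert u S) ?_ ?_ ?_ ?_
  · intro x hx
    rcases Finset.mem_insert.1 hx with rfl | hx
    · exact hu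
    · exact hA (hS hx)
  · rw [Finset.card_insert_of_notMem huS, hc]
  · intro x hx y hy z hz hxy hyz
    have hzS : z ∈ S := by
      rcases Finset.mem_insert.1 hz with rfl | h
      · rcases Finset.mem_insert.1 hy with rfl | h
        · omega
        · have := (hAu y (hS h)).1; omega
      · exact h
    have hyS : y ∈ S := by
      rcases Finset.mem_insert.1 hy with rfl | h
      · rcases Finset.mem_insert.1 hx with rfl | h
        · omega
        · have := (hAu x (hS h)).1; omega
      · exact h
    rcases Finset.mem_insert.1 hx with rfl | hxS
    · left
      have h1 := (hAu y (hS hyS)).2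
      have h2 := (hAu z (hS hzS)).2
      have h3 := hcol y hyS z hzS hyz
      omega
    · exact hNI x hxS y hyS z hzS hxy hyz
  · intro x hx y hy hxy
    have hyS : y ∈ S := by
      rcases Finset.mem_insert.1 hy with rfl | h
      · rcases Finset.mem_insert.1 hx with rfl | h
        · omega
        · have := (hAu x (hS h)).1; omega
      · exact h
    rcases Finset.mem_insert.1 hx with rfl | hxS
    · have := (hAu y (hS hyS)).2; omega
    · have := hcol x hxS y hyS hxy; omega

lemma free_bwd {p lo hi w b : ℕ} {T A : Finset ℕ} (hF : FreeOf χ (p + 1) lo hi T)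
    (hw : w ∈ T) (hA : A ⊆ T) (hAw : ∀ x ∈ A, x < w ∧ χ x w = b) (ha : lo ≤ b) (ha' : b < hi) :
    FreeOf χ p b hi A := by
  intro S hS hc hNI hcol
  have hwS : w ∉ S := fun h => lt_irrefl _ (hAw w (hS h)).1
  refine hF (insert w S) ?_ ?_ ?_ ?_
  · intro x hx
    rcases Finset.mem_insert.1 hx with rfl | hx
    · exact hw
    · exact hA (hS hx)
  · rw [Finset.card_insert_of_notMem hwS, hc]
  · intro x hx y hy z hz hxy hyz
    have hxS : x ∈ S := by
      rcases Finset.mem_insert.1 hx with rfl | h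
      · rcases Finset.mem_insert.1 hy with rfl | h
        · omega
        · have := (hAw y (hS h)).1; omega
      · exact h
    have hyS : y ∈ S := by
      rcases Finset.mem_insert.1 hy with rfl | h
      · rcases Finset.mem_insert.1 hz with rfl | h
        · omega
        · have := (hAw z (hS h)).1; omega
      · exact h
    rcases Finset.mem_insert.1 hz with rfl | hzS
    · right
      have h1 := (hAw y (hS hyS)).2
      have h2 := (hAw x (hS hxS)).2
      have h3 := hcol x hxS y hyS hxy
      omega
    · exact hNI x hxS y hyS z hzS hxy hyz
  · intro x hx y hy hxy
    have hxS : x ∈ S := by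
      rcases Finset.mem_insert.1 hx with rfl | h
      · rcases Finset.mem_insert.1 hy with rfl | h
        · omega
        · have := (hAw y (hS h)).1; omega
      · exact h
    rcases Finset.mem_insert.1 hy with rfl | hyS
    · have := (hAw x (hS hxS)).2; omega
    · have := hcol x hxS y hyS hxy; omega

/-- `2`-free means that the colours do not occur. -/
lemma free_two {lo hi : ℕ} {T : Finset ℕ} (hF : FreeOf χ 2 lo hi T) :
    ∀ u ∈ T, ∀ v ∈ T, u < v → ¬ (lo ≤ χ u v ∧ χ u v < hi) := by
  intro u hu v hv huv hc
  refine hF {u, v} ?_ (Finset.card_pair huv.ne) ?_ ?_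
  · intro x hx
    simp only [Finset.mem_insert, Finset.mem_singleton] at hx
    rcases hx with rfl | rfl <;> assumption
  · intro x hx y hy z hz hxy hyz
    simp only [Finset.mem_insert, Finset.mem_singleton] at hx hy hz
    omega
  · intro x hx y hy hxy
    simp only [Finset.mem_insert, Finset.mem_singleton] at hx hy
    have h1 : x = u := by omega
    have h2 : y = v := by omega
    subst h1 h2
    exact hc

lemma pop_fwd {E lo hi : ℕ} {T : Finset ℕ} (hd : DenseIn χ E lo hi T) :
    ∃ u ∈ T, ∃ H ⊆ T, T.card ≤ 2 ^ E * H.card ∧ H.Nonempty ∧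
      ∀ x ∈ H, u < x ∧ lo ≤ χ u x ∧ χ u x < hi := by
  obtain ⟨h1, h2⟩ := hd
  rw [cnt_fwd] at h2
  obtain ⟨u, hu, h⟩ := pop_aux h1 _ h2
  refine ⟨u, hu, _, Finset.filter_subset _ _, h, ?_, fun x hx => (Finset.mem_filter.1 hx).2⟩
  have := h1.card_pos
  rw [← Finset.card_pos]
  by_contra h0
  have h0 := Nat.eq_zero_of_not_pos h0
  rw [h0] at h
  omega

lemma pop_bwd {E lo hi : ℕ} {T : Finset ℕ} (hd : DenseIn χ E lo hi T) :
    ∃ w ∈ T, ∃ H ⊆ T, T.card ≤ 2 ^ E * H.card ∧ H.Nonempty ∧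
      ∀ x ∈ H, x < w ∧ lo ≤ χ x w ∧ χ x w < hi := by
  obtain ⟨h1, h2⟩ := hd
  rw [cnt_bwd] at h2
  obtain ⟨u, hu, h⟩ := pop_aux h1 _ h2
  refine ⟨u, hu, _, Finset.filter_subset _ _, h, ?_, fun x hx => (Finset.mem_filter.1 hx).2⟩
  have := h1.card_pos
  rw [← Finset.card_pos]
  by_contra h0
  have h0 := Nat.eq_zero_of_not_pos h0
  rw [h0] at h
  omega

lemma dense_three {e lo c c' hi : ℕ} {T : Finset ℕ} (hd : DenseIn χ e lo hi T) :
    DenseIn χ (e + 2) lo c T ∨ DenseIn χ (e + 2) c c' T ∨ DenseIn χ (e + 2) c' hi T := by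
  obtain ⟨h1, h2⟩ := hd
  by_contra! hc
  simp only [DenseIn, h1, true_and, not_le] at hc
  have h3 := cnt_le_add (χ := χ) (lo := lo) (hi := hi) (T := T) (le_refl c)
  have h4 := cnt_le_add (χ := χ) (lo := c) (hi := hi) (T := T) (le_refl c')
  rw [pow_add] at hc
  have h5 : 2 ^ e * cnt χ lo hi T ≤ 2 ^ e * (cnt χ lo c T + (cnt χ c c' T + cnt χ c' hi T)) :=
    Nat.mul_le_mul_left _ (by omega)
  nlinarith

lemma dense_two {e lo m hi : ℕ} {T : Finset ℕ} (hd : DenseIn χ e lo hi T) :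
    DenseIn χ (e + 1) lo (m + 1) T ∨ DenseIn χ (e + 1) m hi T := by
  obtain ⟨h1, h2⟩ := hd
  by_contra! hc
  simp only [DenseIn, h1, true_and, not_le] at hc
  have h3 := cnt_le_add (χ := χ) (lo := lo) (hi := hi) (T := T) (Nat.le_succ m)
  rw [pow_add] at hc
  have h5 : 2 ^ e * cnt χ lo hi T ≤ 2 ^ e * (cnt χ lo (m+1) T + cnt χ m hi T) :=
    Nat.mul_le_mul_left _ h3
  nlinarith

lemma dense_lt {e lo hi : ℕ} {T : Finset ℕ} (hd : DenseIn χ e lo hi T) : lo < hi := by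
  by_contra h
  obtain ⟨h1, h2⟩ := hd
  rw [cnt_eq_zero (fun u _ v _ _ hc => by omega)] at h2
  have := h1.card_pos
  have : 0 < T.card ^ 2 := by positivity
  omega

lemma cost_le {x y a b : ℕ} (h : x ≤ 2 ^ a * y) (hab : a ≤ b) : x ≤ 2 ^ b * y :=
  h.trans (Nat.mul_le_mul_right _ (Nat.pow_le_pow_right (by norm_num) hab))

lemma cost_trans {x y z a b : ℕ} (h : x ≤ 2 ^ a * y) (h' : y ≤ 2 ^ b * z) :
    x ≤ 2 ^ (a + b) * z := by
  rw [pow_add, mul_assoc]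
  exact h.trans (Nat.mul_le_mul_left _ h')

lemma node {l p e K1 : ℕ}
    (P : ∀ lo hi T, FreeOf χ p lo hi T → hi - lo < 2 ^ l → Kill χ (e + 2) lo hi K1 T) :
    ∀ K j k1 k2 lo c c' hi T, K = k1 + k2 + j * (e + 3 + l + K1) →
      FreeOf χ (p + 1) lo hi T → Kill χ (e + 2) lo c k1 T → Kill χ (e + 2) c' hi k2 T →
      lo ≤ c → c' ≤ hi → c' - c < 2 ^ j → hi - lo < 2 ^ l → Kill χ e lo hi K T := by
  intro K
  induction K using Nat.strong_induction_on with
  | _ K ih =>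
  intro j k1 k2 lo c c' hi T hK hF hL hR h1 h3 hj hl
  rw [Kill]
  intro T' hT' hd
  rcases dense_three (c := c) (c' := c') hd with hd' | hd' | hd'
  · rw [Kill] at hL
    obtain ⟨k', hk', T'', hT'', hc, hkill⟩ := hL T' hT' hd'
    refine ⟨k' + k2 + j * (e + 3 + l + K1), by omega, T'', hT'', ?_, ?_⟩
    · exact cost_le hc (by omega)
    · exact ih _ (by omega) j k' k2 lo c c' hi T'' rfl (hF.mono (hT''.trans hT')) hkill
        (hR.mono (hT''.trans hT')) h1 h3 hj hl
  · have hcc := dense_lt hd'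
    obtain ⟨i, rfl⟩ : ∃ i, j = i + 1 := by
      cases j with
      | zero => simp at hj; omega
      | succ i => exact ⟨i, rfl⟩
    rw [pow_succ] at hj
    have hmul : (i + 1) * (e + 3 + l + K1) = i * (e + 3 + l + K1) + (e + 3 + l + K1) := by ring
    rcases dense_two (m := c + (c' - c) / 2) hd' with hd2 | hd2
    · obtain ⟨w, hw, H, hH, hcost, hne, hcol⟩ := pop_bwd hd2
      obtain ⟨b, hb1, hb2, hcost2⟩ := pigeon (l := l) (fun x => χ x w)
        (fun x hx => (hcol x hx).2) (by omega) hne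
      set A := H.filter (fun x => χ x w = b) with hA
      have hAH : A ⊆ H := Finset.filter_subset _ _
      have hAT : A ⊆ T := hAH.trans (hH.trans hT')
      have hfree := free_bwd hF (hT' hw) hAT
        (fun x hx => ⟨(hcol x (hAH hx)).1, (Finset.mem_filter.1 hx).2⟩) (by omega) (by omega)
      have hfree' : FreeOf χ p (c + (c' - c) / 2) hi A := by
        intro S hS hc hN hcc
        exact hfree S hS hc hN (fun u hu v hv huv => by
          have := hcc u hu v hv huv; omega)
      refine ⟨k1 + K1 + i * (e + 3 + l + K1), by omega, A, hAH.trans hH, ?_, ?_⟩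
      · exact cost_le (cost_trans hcost hcost2) (by omega)
      · exact ih _ (by omega) i k1 K1 lo c _ hi A rfl (hF.mono hAT) (hL.mono hAT)
          (P _ _ _ hfree' (by omega)) h1 (by omega) (by omega) hl
    · obtain ⟨w, hw, H, hH, hcost, hne, hcol⟩ := pop_fwd hd2
      obtain ⟨b, hb1, hb2, hcost2⟩ := pigeon (l := l) (fun x => χ w x)
        (fun x hx => (hcol x hx).2) (by omega) hne
      set A := H.filter (fun x => χ w x = b) with hA
      have hAH : A ⊆ H := Finset.filter_subset _ _
      have hAT : A ⊆ T := hAH.trans (hH.trans hT')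
      have hfree := free_fwd hF (hT' hw) hAT
        (fun x hx => ⟨(hcol x (hAH hx)).1, (Finset.mem_filter.1 hx).2⟩) (by omega) (by omega)
      have hfree' : FreeOf χ p lo (c + (c' - c) / 2 + 1) A := by
        intro S hS hc hN hcc
        exact hfree S hS hc hN (fun u hu v hv huv => by
          have := hcc u hu v hv huv; omega)
      refine ⟨K1 + k2 + i * (e + 3 + l + K1), by omega, A, hAH.trans hH, ?_, ?_⟩
      · exact cost_le (cost_trans hcost hcost2) (by omega)
      · exact ih _ (by omega) i K1 k2 lo _ c' hi A rfl (hF.mono hAT)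
          (P _ _ _ hfree' (by omega)) (hR.mono hAT) (by omega) h3 (by omega) hl
  · rw [Kill] at hR
    obtain ⟨k', hk', T'', hT'', hc, hkill⟩ := hR T' hT' hd'
    refine ⟨k1 + k' + j * (e + 3 + l + K1), by omega, T'', hT'', ?_, ?_⟩
    · exact cost_le hc (by omega)
    · exact ih _ (by omega) j k1 k' lo c c' hi T'' rfl (hF.mono (hT''.trans hT'))
        (hL.mono (hT''.trans hT')) hkill h1 h3 hj hl

lemma node3 {l e lo hi : ℕ} (hl : hi - lo < 2 ^ l) :
    ∀ j c c' T, FreeOf χ 3 lo hi T → SoftDead χ l lo c T → SoftDead χ l c' hi T →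
      lo ≤ c → c' ≤ hi → c ≤ c' → c' - c < 2 ^ j →
      Kill χ e lo hi (j * (e + 3) + (e + 3 + 2 * l)) T := by
  intro j
  induction j with
  | zero =>
    intro c c' T hF hL hR h1 h3 hcc hj
    rw [Kill]
    intro T' hT' hd
    have hc' : c' = c := by simp at hj; omega
    subst hc'
    rcases dense_three (c := c') (c' := c') hd with hd' | hd' | hd'
    · obtain ⟨w, hw, H, hH, hcost, hne, hcol⟩ := pop_bwd hd'
      obtain ⟨b, hb1, hb2, hcost2⟩ := pigeon (l := l) (fun x => χ x w)
        (fun x hx => (hcol x hx).2) (by omega) hne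
      set A := H.filter (fun x => χ x w = b) with hA
      have hAH : A ⊆ H := Finset.filter_subset _ _
      have hAT : A ⊆ T := hAH.trans (hH.trans hT')
      have hfree := free_two (free_bwd hF (hT' hw) hAT
        (fun x hx => ⟨(hcol x (hAH hx)).1, (Finset.mem_filter.1 hx).2⟩) (by omega) (by omega))
      obtain ⟨T'', hT'', hcost3, hnone⟩ := hL A hAT
      refine ⟨0, by omega, T'', hT''.trans (hAH.trans hH), ?_, kill_of_none ?_⟩
      · exact cost_le (cost_trans (cost_trans hcost hcost2) hcost3) (by omega)
      · intro u hu v hv huv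
        have := hfree u (hT'' hu) v (hT'' hv) huv
        have := hnone u hu v hv huv
        omega
    · have := dense_lt hd'
      omega
    · obtain ⟨w, hw, H, hH, hcost, hne, hcol⟩ := pop_fwd hd'
      obtain ⟨b, hb1, hb2, hcost2⟩ := pigeon (l := l) (fun x => χ w x)
        (fun x hx => (hcol x hx).2) (by omega) hne
      set A := H.filter (fun x => χ w x = b) with hA
      have hAH : A ⊆ H := Finset.filter_subset _ _
      have hAT : A ⊆ T := hAH.trans (hH.trans hT')
      have hfree := free_two (free_fwd hF (hT' hw) hAT
        (fun x hx => ⟨(hcol x (hAH hx)).1, (Finset.mem_filter.1 hx).2⟩) (by omega) (by omega))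
      obtain ⟨T'', hT'', hcost3, hnone⟩ := hR A hAT
      refine ⟨0, by omega, T'', hT''.trans (hAH.trans hH), ?_, kill_of_none ?_⟩
      · exact cost_le (cost_trans (cost_trans hcost hcost2) hcost3) (by omega)
      · intro u hu v hv huv
        have := hfree u (hT'' hu) v (hT'' hv) huv
        have := hnone u hu v hv huv
        omega
  | succ i ih =>
    intro c c' T hF hL hR h1 h3 hcc hj
    rw [pow_succ] at hj
    have hmul : (i + 1) * (e + 3) = i * (e + 3) + (e + 3) := by ring
    rw [Kill]
    intro T' hT' hd
    rcases dense_three (c := c) (c' := c') hd with hd' | hd' | hd'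
    · obtain ⟨w, hw, H, hH, hcost, hne, hcol⟩ := pop_bwd hd'
      obtain ⟨b, hb1, hb2, hcost2⟩ := pigeon (l := l) (fun x => χ x w)
        (fun x hx => (hcol x hx).2) (by omega) hne
      set A := H.filter (fun x => χ x w = b) with hA
      have hAH : A ⊆ H := Finset.filter_subset _ _
      have hAT : A ⊆ T := hAH.trans (hH.trans hT')
      have hfree := free_two (free_bwd hF (hT' hw) hAT
        (fun x hx => ⟨(hcol x (hAH hx)).1, (Finset.mem_filter.1 hx).2⟩) (by omega) (by omega))
      obtain ⟨T'', hT'', hcost3, hnone⟩ := hL A hAT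
      refine ⟨0, by omega, T'', hT''.trans (hAH.trans hH), ?_, kill_of_none ?_⟩
      · exact cost_le (cost_trans (cost_trans hcost hcost2) hcost3) (by omega)
      · intro u hu v hv huv
        have := hfree u (hT'' hu) v (hT'' hv) huv
        have := hnone u hu v hv huv
        omega
    · have hcc := dense_lt hd'
      rcases dense_two (m := c + (c' - c) / 2) hd' with hd2 | hd2
      · obtain ⟨w, hw, H, hH, hcost, hne, hcol⟩ := pop_bwd hd2
        have hHT : H ⊆ T := hH.trans hT'
        refine ⟨i * (e + 3) + (e + 3 + 2 * l), by omega, H, hH, cost_le hcost (by omega), ?_⟩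
        refine ih c (c + (c' - c) / 2) H (hF.mono hHT) (hL.mono hHT) ?_ h1 (by omega)
          (by omega) (by omega)
        intro T2 hT2
        rcases T2.eq_empty_or_nonempty with rfl | hne2
        · exact ⟨∅, by simp, by simp, by simp⟩
        obtain ⟨b, hb1, hb2, hcost2⟩ := pigeon (l := l) (fun x => χ x w)
          (fun x hx => (hcol x (hT2 hx)).2) (by omega) hne2
        refine ⟨_, Finset.filter_subset _ _, hcost2, ?_⟩
        have hsub : T2.filter (fun x => χ x w = b) ⊆ H := (Finset.filter_subset _ _).trans hT2
        have hfree := free_two (free_bwd hF (hT' hw) (hsub.trans hHT)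
          (fun x hx => ⟨(hcol x (hsub hx)).1, (Finset.mem_filter.1 hx).2⟩) (by omega) (by omega))
        intro u hu v hv huv
        have := hfree u hu v hv huv
        omega
      · obtain ⟨w, hw, H, hH, hcost, hne, hcol⟩ := pop_fwd hd2
        have hHT : H ⊆ T := hH.trans hT'
        refine ⟨i * (e + 3) + (e + 3 + 2 * l), by omega, H, hH, cost_le hcost (by omega), ?_⟩
        refine ih (c + (c' - c) / 2 + 1) c' H (hF.mono hHT) ?_ (hR.mono hHT) (by omega) h3
          (by omega) (by omega)
        intro T2 hT2
        rcases T2.eq_empty_or_nonempty with rfl | hne2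
        · exact ⟨∅, by simp, by simp, by simp⟩
        obtain ⟨b, hb1, hb2, hcost2⟩ := pigeon (l := l) (fun x => χ w x)
          (fun x hx => (hcol x (hT2 hx)).2) (by omega) hne2
        refine ⟨_, Finset.filter_subset _ _, hcost2, ?_⟩
        have hsub : T2.filter (fun x => χ w x = b) ⊆ H := (Finset.filter_subset _ _).trans hT2
        have hfree := free_two (free_fwd hF (hT' hw) (hsub.trans hHT)
          (fun x hx => ⟨(hcol x (hsub hx)).1, (Finset.mem_filter.1 hx).2⟩) (by omega) (by omega))
        intro u hu v hv huv
        have := hfree u hu v hv huv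
        omega
    · obtain ⟨w, hw, H, hH, hcost, hne, hcol⟩ := pop_fwd hd'
      obtain ⟨b, hb1, hb2, hcost2⟩ := pigeon (l := l) (fun x => χ w x)
        (fun x hx => (hcol x hx).2) (by omega) hne
      set A := H.filter (fun x => χ w x = b) with hA
      have hAH : A ⊆ H := Finset.filter_subset _ _
      have hAT : A ⊆ T := hAH.trans (hH.trans hT')
      have hfree := free_two (free_fwd hF (hT' hw) hAT
        (fun x hx => ⟨(hcol x (hAH hx)).1, (Finset.mem_filter.1 hx).2⟩) (by omega) (by omega))
      obtain ⟨T'', hT'', hcost3, hnone⟩ := hR A hAT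
      refine ⟨0, by omega, T'', hT''.trans (hAH.trans hH), ?_, kill_of_none ?_⟩
      · exact cost_le (cost_trans (cost_trans hcost hcost2) hcost3) (by omega)
      · intro u hu v hv huv
        have := hfree u (hT'' hu) v (hT'' hv) huv
        have := hnone u hu v hv huv
        omega

/-- The total cost. -/
def costK (l : ℕ) : ℕ → ℕ → ℕ
  | 0, e => l * (e + 3) + (e + 3 + 2 * l)
  | q + 1, e => l * (e + 3 + l + costK l q (e + 2))

lemma kill_main {l : ℕ} : ∀ q e lo hi T, FreeOf χ (q + 3) lo hi T → hi - lo < 2 ^ l →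
    Kill χ e lo hi (costK l q e) T := by
  intro q
  induction q with
  | zero =>
    intro e lo hi T hF hl
    by_cases h : lo ≤ hi
    · refine node3 hl l lo hi T hF ?_ ?_ le_rfl le_rfl h hl
      · intro T' hT'
        exact ⟨T', subset_rfl, Nat.le_mul_of_pos_left _ (by positivity),
          fun u _ v _ _ hc => by omega⟩
      · intro T' hT'
        exact ⟨T', subset_rfl, Nat.le_mul_of_pos_left _ (by positivity),
          fun u _ v _ _ hc => by omega⟩
    · exact kill_of_none (fun u _ v _ _ hc => by omega)
  | succ q ih =>
    intro e lo hi T hF hl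
    refine node (P := fun lo hi T => ih (e + 2) lo hi T) _ l 0 0 lo lo hi hi T ?_ hF
      (kill_of_none (fun u _ v _ _ hc => by omega)) (kill_of_none (fun u _ v _ _ hc => by omega))
      le_rfl le_rfl hl hl
    simp [costK]

lemma costK_le {l : ℕ} (hl : 1 ≤ l) : ∀ q e, costK l q e ≤
    l ^ (q + 1) * (2 * (e + 2 * q + 3) + 2 + q * (e + 2 * q + 4)) := by
  intro q
  induction q with
  | zero =>
    intro e
    simp only [costK]
    have : e + 3 ≤ l * (e + 3) := Nat.le_mul_of_pos_left _ (by omega)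
    simp only [zero_add, pow_one]
    nlinarith
  | succ q ih =>
    intro e
    simp only [costK]
    have h := ih (e + 2)
    have h1 : e + 3 + l ≤ l ^ (q + 1) * (e + 2 * (q + 1) + 4) := by
      have h2 : l ≤ l ^ (q + 1) := Nat.le_self_pow (by omega) l
      have h3 : e + 3 + l ≤ l * (e + 2 * (q + 1) + 4) := by nlinarith
      exact h3.trans (Nat.mul_le_mul_right _ h2)
    calc l * (e + 3 + l + costK l q (e + 2)) ≤ l * (l ^ (q + 1) * (e + 2 * (q + 1) + 4) +
          l ^ (q + 1) * (2 * (e + 2 + 2 * q + 3) + 2 + q * (e + 2 + 2 * q + 4))) := by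
          gcongr
      _ = _ := by ring

lemma card_sq {lo hi : ℕ} {T : Finset ℕ} (hcol : ∀ u v, lo ≤ χ u v ∧ χ u v < hi) :
    T.card ^ 2 = 2 * cnt χ lo hi T + T.card := by
  have h1 : cnt χ lo hi T = ∑ u ∈ T, ∑ v ∈ T, if u < v then 1 else 0 := by
    rw [cnt_fwd]
    refine Finset.sum_congr rfl fun u _ => ?_
    rw [Finset.card_filter]
    refine Finset.sum_congr rfl fun v _ => ?_
    simp [hcol u v]
  have h2 : cnt χ lo hi T = ∑ u ∈ T, ∑ v ∈ T, if v < u then 1 else 0 := by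
    rw [h1, Finset.sum_comm]
  have h3 : T.card = ∑ u ∈ T, ∑ v ∈ T, if u = v then 1 else 0 := by
    simp
  have h4 : T.card ^ 2 = ∑ u ∈ T, ∑ v ∈ T, 1 := by simp [sq]
  have h5 : ∑ u ∈ T, ∑ v ∈ T, 1 = ∑ u ∈ T, ∑ v ∈ T, ((if u < v then 1 else 0) +
      (if v < u then 1 else 0) + (if u = v then 1 else 0)) := by
    refine Finset.sum_congr rfl fun u _ => Finset.sum_congr rfl fun v _ => ?_
    rcases lt_trichotomy u v with h | h | h
    · simp [h, h.not_gt, h.ne]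
    · simp [h]
    · simp [h, h.not_gt, h.ne']
  rw [h4, h5]
  simp only [Finset.sum_add_distrib]
  rw [← h1, ← h2, ← h3]
  ring

lemma kill_card {lo hi : ℕ} (hcol : ∀ u v, lo ≤ χ u v ∧ χ u v < hi) :
    ∀ k T, Kill χ 2 lo hi k T → T.card < 2 ^ (k + 1) := by
  intro k
  induction k using Nat.strong_induction_on with
  | _ k ih =>
  intro T hK
  by_contra! hc
  have h2 : 2 ≤ T.card := by
    have : 0 < 2 ^ k := by positivity
    rw [pow_succ] at hc
    omega
  rw [Kill] at hK
  have hsq := card_sq (T := T) hcol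
  obtain ⟨k', hk, T'', hT, hcost, hK'⟩ := hK T subset_rfl
    ⟨Finset.card_pos.1 (by omega), by nlinarith⟩
  have h3 := ih k' hk T'' hK'
  have h4 : 2 ^ (k - k') * T''.card < 2 ^ (k - k') * 2 ^ (k' + 1) :=
    Nat.mul_lt_mul_of_pos_left h3 (by positivity)
  rw [← pow_add, show k - k' + (k' + 1) = k + 1 by omega] at h4
  omega

end

/-- `f(s; n) ≤ 2^{5^s s! (log n)^{s-2}}` for `s ≥ 3`, `n ≥ 2`: every coloring of the
pairs of `[N]` with colors `{1, ..., n}`, where `N ≥ 2^{5^s s! (log₂ n)^{s-2}}`,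
contains a non-increasing set of size `s`. -/
theorem f_s_bound (s n N : ℕ) (hs : 3 ≤ s) (hn : 2 ≤ n)
    (hN : (2 : ℝ) ^ ((5 : ℝ) ^ s * (Nat.factorial s) * (Real.logb 2 n) ^ (s - 2)) ≤ N)
    (χ : ℕ → ℕ → ℕ) (hχ : ∀ u v, χ u v ∈ Finset.Icc 1 n) :
    ∃ S : Finset ℕ, S ⊆ Finset.Icc 1 N ∧ S.card = s ∧
      ∀ u ∈ S, ∀ v ∈ S, ∀ w ∈ S, u < v → v < w → NonIncTriple χ u v w := by
  by_contra hcon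
  obtain ⟨q, rfl⟩ : ∃ q, s = q + 3 := ⟨s - 3, by omega⟩
  have hcol : ∀ u v, 1 ≤ χ u v ∧ χ u v < n + 1 := fun u v => by
    have := Finset.mem_Icc.1 (hχ u v); omega
  have hF : FreeOf χ (q + 3) 1 (n + 1) (Finset.Icc 1 N) := by
    intro S hS hc hNI _
    exact hcon ⟨S, hS, hc, hNI⟩
  set l := Nat.log 2 n + 1 with hl
  have hnl : n + 1 - 1 < 2 ^ l := by
    simpa using Nat.lt_pow_succ_log_self (by norm_num : 1 < 2) n
  have hcard := kill_card hcol _ _ (kill_main q 2 1 (n + 1) _ hF hnl)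
  rw [Nat.card_Icc, Nat.add_sub_cancel] at hcard
  have hK := costK_le (l := l) (by omega) q 2
  have hlog1 : (1 : ℝ) ≤ Real.logb 2 n := by
    rw [Real.le_logb_iff_rpow_le (by norm_num) (by positivity)]
    simpa using (by exact_mod_cast hn : (2 : ℝ) ≤ n)
  have hlog2 : (l : ℝ) ≤ 2 * Real.logb 2 n := by
    have : ((Nat.log 2 n : ℕ) : ℝ) ≤ Real.logb 2 n := by
      exact_mod_cast Real.natLog_le_logb n 2
    rw [hl]; push_cast; linarith
  set x := Real.logb 2 n with hx
  have hnat : 2 * (2 + 2 * q + 3) + 2 + q * (2 + 2 * q + 4) + 1 ≤ 2 * (q + 3) * (q + 3) := by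
    nlinarith
  have hK2 : costK l q 2 + 1 ≤ l ^ (q + 1) * (2 * (q + 3) * (q + 3)) := by
    have h1 : 1 ≤ l ^ (q + 1) := Nat.one_le_pow _ _ (by omega)
    calc costK l q 2 + 1 ≤ l ^ (q + 1) * (2 * (2 + 2 * q + 3) + 2 + q * (2 + 2 * q + 4) + 1) := by
          rw [mul_add _ _ 1]; omega
      _ ≤ _ := Nat.mul_le_mul_left _ hnat
  have hnum : 2 ^ (q + 1) * (2 * (q + 3) * (q + 3)) ≤ 5 ^ (q + 3) * (q + 3).factorial := by
    have h1 : q + 3 ≤ (q + 3).factorial := Nat.self_le_factorial _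
    have h2 : q + 3 ≤ 2 ^ (q + 3) := Nat.lt_two_pow_self.le
    have h3 : (2 * 2) ^ (q + 3) ≤ 5 ^ (q + 3) := Nat.pow_le_pow_left (by norm_num) _
    rw [mul_pow] at h3
    have h4 : 2 ^ (q + 3) = 4 * 2 ^ (q + 1) := by ring
    calc 2 ^ (q + 1) * (2 * (q + 3) * (q + 3)) ≤ (2 ^ (q + 3) * (q + 3)) * (q + 3) := by
          rw [h4]; nlinarith [Nat.zero_le (2 ^ (q + 1) * ((q + 3) * (q + 3)))]
      _ ≤ (2 ^ (q + 3) * 2 ^ (q + 3)) * (q + 3).factorial := by gcongr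
      _ ≤ _ := by gcongr
  have hexp : ((costK l q 2 + 1 : ℕ) : ℝ) ≤
      (5 : ℝ) ^ (q + 3) * (Nat.factorial (q + 3)) * x ^ (q + 3 - 2) := by
    rw [show q + 3 - 2 = q + 1 by omega]
    have hnum' : (2 : ℝ) ^ (q + 1) * (2 * (q + 3) * (q + 3)) ≤
        5 ^ (q + 3) * (q + 3).factorial := by exact_mod_cast hnum
    calc ((costK l q 2 + 1 : ℕ) : ℝ) ≤ (l : ℝ) ^ (q + 1) * (2 * (q + 3) * (q + 3)) := by
          exact_mod_cast hK2
      _ ≤ (2 * x) ^ (q + 1) * (2 * (q + 3) * (q + 3)) := by gcongr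
      _ = (2 : ℝ) ^ (q + 1) * (2 * (q + 3) * (q + 3)) * x ^ (q + 1) := by ring
      _ ≤ _ := by gcongr
  have hfin : (2 : ℝ) ^ (costK l q 2 + 1) ≤ N := by
    refine le_trans ?_ hN
    rw [← Real.rpow_natCast]
    exact Real.rpow_le_rpow_of_exponent_le (by norm_num) hexp
  have : 2 ^ (costK l q 2 + 1) ≤ N := by exact_mod_cast hfin
  omega
end

section
/- For s fixed and n ≥ 2, the ordered 3-uniform Ramsey number of the complete 3-uniform hypergraph K_s versus the tight monotone path P_n satisfies r_3(K_s, P_n) < 2^{c_s (log n)^{s-1}} where c_s = 5^s s!. -/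
open Finset in
/-- One step: either many middle vertices for a suitable pair, giving a large set `B`. -/
lemma qr_step (n q Q W : ℕ) (f ψ : ℕ → ℕ → ℕ) (U : Finset ℕ)
    (hn : 1 ≤ n) (hq : 1 ≤ q) (hqQ : q ≤ Q) (hW : 1 ≤ W)
    (hf : ∀ u v, f u v < n) (hψ : ∀ u v, ψ u v < q)
    (hU : (2 * (n + 1) ^ Q * (1 + 2 * (n + 1) ^ Q * Q ^ 2 * n)) * W ≤ U.card) :
    ∃ i < q, ∃ c, ∃ x ∈ U, ∃ y ∈ U, ∃ B ⊆ U, W ≤ B.card ∧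
      ∀ b ∈ B, x < b ∧ b < y ∧ ψ x b = i ∧ f x b = c ∧ ψ b y = i ∧ f b y ≤ c := by
  classical
  set M := (n + 1) ^ Q with hM
  have hMpos : 1 ≤ M := Nat.one_le_pow _ _ (by omega)
  have hQ : 1 ≤ Q := by omega
  set D := Q * n * W with hD
  have hDpos : 1 ≤ D := Nat.mul_pos (Nat.mul_pos hQ hn) hW
  set D' := 2 * M * D with hD'
  have hD'pos : 1 ≤ D' := Nat.mul_pos (Nat.mul_pos (by norm_num) hMpos) hDpos
  -- in-neighbourhoods with large colour
  let A : ℕ → ℕ → ℕ → Finset ℕ := fun i v c => U.filter (fun w => w < v ∧ ψ w v = i ∧ c ≤ f w v + 1)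
  let p : ℕ → ℕ → ℕ := fun v i => Nat.findGreatest (fun c => D' ≤ (A i v c).card) n
  have hp_good : ∀ v i, p v i ≠ 0 → D' ≤ (A i v (p v i)).card := by
    intro v i h
    exact Nat.findGreatest_of_ne_zero (P := fun c => D' ≤ (A i v c).card) rfl h
  have hp_bad : ∀ v i, (A i v (p v i + 1)).card ≤ D' := by
    intro v i
    by_cases h : p v i + 1 ≤ n
    · have := Nat.findGreatest_is_greatest (P := fun c => D' ≤ (A i v c).card)
        (k := p v i + 1) (n := n) (Nat.lt_succ_self _) h
      omega
    · have : A i v (p v i + 1) = ∅ := by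
        apply Finset.filter_eq_empty_iff.2
        intro w _ hw
        have := hf w v
        omega
      rw [this]; simp
  -- pigeonhole on labels
  have hUpos : 0 < U.card := lt_of_lt_of_le (by positivity) hU
  let L : ℕ → (Fin q → Fin (n + 1)) :=
    fun v i => ⟨p v i, Nat.lt_succ_of_le (Nat.findGreatest_le n)⟩
  have hcard : (Finset.univ : Finset (Fin q → Fin (n + 1))).card ≤ M := by
    simp only [Finset.card_univ, Fintype.card_fun, Fintype.card_fin]
    exact Nat.pow_le_pow_right (by omega) hqQ
  have hex : ∃ lab, U.card ≤ M * (U.filter (fun v => L v = lab)).card := by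
    by_contra hcon
    push Not at hcon
    have h1 : U.card = ∑ lab : Fin q → Fin (n + 1), (U.filter (fun v => L v = lab)).card :=
      Finset.card_eq_sum_card_fiberwise (fun _ _ => Finset.mem_coe.2 (Finset.mem_univ _))
    have h2 : ∑ lab : Fin q → Fin (n + 1), M * (U.filter (fun v => L v = lab)).card <
        ∑ _lab : Fin q → Fin (n + 1), U.card :=
      Finset.sum_lt_sum_of_nonempty ⟨fun _ => 0, Finset.mem_univ _⟩ (fun lab _ => hcon lab)
    rw [← Finset.mul_sum, ← h1, Finset.sum_const, smul_eq_mul] at h2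
    exact absurd (Nat.mul_le_mul_right U.card hcard) (by omega)
  obtain ⟨lab, hlab⟩ := hex
  set Z := U.filter (fun v => L v = lab) with hZ
  have hZcard : 2 * (1 + Q * D') ≤ Z.card := by
    have h3 : 2 * M * (1 + 2 * M * Q ^ 2 * n) * W = M * (2 * (W + Q * D')) := by
      rw [hD', hD]; ring
    rw [h3] at hU
    have h4 := Nat.le_of_mul_le_mul_left (hU.trans hlab) hMpos
    omega
  have hZne : Z.Nonempty := Finset.card_pos.1 (by omega)
  set y := Z.max' hZne with hy
  have hyZ : y ∈ Z := Finset.max'_mem _ _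
  have hpZ : ∀ v ∈ Z, ∀ i < q, p v i = p y i := by
    intro v hv i hi
    have h1 : L v = L y := by
      rw [(Finset.mem_filter.1 hv).2, (Finset.mem_filter.1 hyZ).2]
    have := congrArg Fin.val (congrFun h1 ⟨i, hi⟩)
    exact this
  -- good vertices
  set G := (Z.erase y).filter (fun u => f u y + 1 ≤ p y (ψ u y)) with hG
  have hlt : ∀ u ∈ Z.erase y, u < y := fun u hu =>
    lt_of_le_of_ne (Finset.le_max' _ _ (Finset.mem_of_mem_erase hu)) (Finset.ne_of_mem_erase hu)
  have hbad : ((Z.erase y).filter (fun u => ¬ (f u y + 1 ≤ p y (ψ u y)))).card ≤ Q * D' := by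
    have hsub : (Z.erase y).filter (fun u => ¬ (f u y + 1 ≤ p y (ψ u y))) ⊆
        (Finset.range q).biUnion (fun i => A i y (p y i + 1)) := by
      intro u hu
      rw [Finset.mem_filter] at hu
      rw [Finset.mem_biUnion]
      refine ⟨ψ u y, Finset.mem_range.2 (hψ u y), ?_⟩
      refine Finset.mem_filter.2 ⟨?_, hlt u hu.1, rfl, by omega⟩
      exact (Finset.mem_filter.1 (Finset.mem_of_mem_erase hu.1)).1
    refine (Finset.card_le_card hsub).trans (Finset.card_biUnion_le.trans ?_)
    refine (Finset.sum_le_card_nsmul _ _ D' (fun i _ => hp_bad y i)).trans ?_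
    rw [Finset.card_range, smul_eq_mul]
    exact Nat.mul_le_mul_right _ hqQ
  have hGcard : Z.card ≤ 2 * G.card := by
    have h1 := Finset.card_filter_add_card_filter_not (s := Z.erase y)
      (fun u => f u y + 1 ≤ p y (ψ u y))
    rw [Finset.card_erase_of_mem hyZ, ← hG] at h1
    have h2 : 1 ≤ Z.card := by omega
    omega
  -- middle vertices
  let mid : ℕ → Finset ℕ := fun w => G.filter (fun u => w < u ∧ ψ w u = ψ u y ∧ f u y ≤ f w u)
  have hmid : ∃ w ∈ U, D ≤ (mid w).card := by
    by_contra hcon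
    push Not at hcon
    have h1 : ∑ w ∈ U, (mid w).card < ∑ _w ∈ U, D :=
      Finset.sum_lt_sum_of_nonempty (Finset.card_pos.1 hUpos) hcon
    have h2 : ∑ w ∈ U, (mid w).card =
        ∑ u ∈ G, (U.filter (fun w => w < u ∧ ψ w u = ψ u y ∧ f u y ≤ f w u)).card :=
      Finset.sum_card_bipartiteAbove_eq_sum_card_bipartiteBelow
        (fun w u => w < u ∧ ψ w u = ψ u y ∧ f u y ≤ f w u)
    have h3 : G.card * D' ≤
        ∑ u ∈ G, (U.filter (fun w => w < u ∧ ψ w u = ψ u y ∧ f u y ≤ f w u)).card := by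
      rw [← smul_eq_mul]
      refine Finset.card_nsmul_le_sum _ _ _ ?_
      intro u hu
      rw [Finset.mem_filter] at hu
      have huZ := Finset.mem_of_mem_erase hu.1
      have he := hpZ u huZ (ψ u y) (hψ u y)
      have h5 := hp_good u (ψ u y) (by omega)
      refine h5.trans (Finset.card_le_card ?_)
      intro w hw
      have hw' := Finset.mem_filter.1 hw
      exact Finset.mem_filter.2 ⟨hw'.1, hw'.2.1, hw'.2.2.1, by omega⟩
    rw [Finset.sum_const, smul_eq_mul] at h1
    have h6 : U.card * D ≤ G.card * D' := by
      calc U.card * D ≤ (M * Z.card) * D := Nat.mul_le_mul_right _ hlab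
        _ ≤ (M * (2 * G.card)) * D := by gcongr
        _ = G.card * D' := by rw [hD']; ring
    omega
  obtain ⟨x, hxU, hx⟩ := hmid
  obtain ⟨⟨i, c⟩, hic, hB⟩ := Finset.exists_le_card_fiber_of_mul_le_card_of_maps_to
    (s := mid x) (t := Finset.range q ×ˢ Finset.range n)
    (f := fun u => (ψ x u, f x u)) (n := W)
    (fun u _ => Finset.mem_product.2 ⟨Finset.mem_range.2 (hψ x u), Finset.mem_range.2 (hf x u)⟩)
    ⟨(0, 0), Finset.mem_product.2 ⟨Finset.mem_range.2 hq, Finset.mem_range.2 hn⟩⟩ (by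
      rw [Finset.card_product, Finset.card_range, Finset.card_range]
      refine le_trans ?_ hx
      rw [hD]
      gcongr)
  refine ⟨i, Finset.mem_range.1 (Finset.mem_product.1 hic).1, c, x, hxU, y,
    (Finset.mem_filter.1 hyZ).1, _, ?_, hB, ?_⟩
  · intro u hu
    have h1 := (Finset.mem_filter.1 (Finset.mem_filter.1 hu).1).1
    exact (Finset.mem_filter.1 (Finset.mem_of_mem_erase (Finset.mem_filter.1 h1).1)).1
  · intro u hu
    have h0 := Finset.mem_filter.1 hu
    have h1 := Finset.mem_filter.1 h0.1
    have h2 := hlt u (Finset.mem_filter.1 h1.1).1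
    have h3 := Prod.mk.inj h0.2
    refine ⟨h1.2.1, h2, h3.1, h3.2, ?_, ?_⟩
    · rw [← h1.2.2.1]; exact h3.1
    · rw [← h3.2]; exact h1.2.2.2

/-- The main Ramsey statement for pair colourings `f` with `n` ordered colours and classes `ψ`. -/
lemma qr_main (n Q : ℕ) (hn : 1 ≤ n) (f : ℕ → ℕ → ℕ) (hf : ∀ u v, f u v < n) :
    ∀ (k q : ℕ) (a : ℕ → ℕ) (ψ : ℕ → ℕ → ℕ) (U : Finset ℕ), 1 ≤ q → q + k ≤ Q →
      ∑ i ∈ Finset.range q, (2 ^ a i - 1) ≤ k → (∀ u v, ψ u v < q) →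
      (2 * (n + 1) ^ Q * (1 + 2 * (n + 1) ^ Q * Q ^ 2 * n)) ^ k ≤ U.card →
      ∃ i < q, ∃ S ⊆ U, S.card = a i ∧ (∀ u ∈ S, ∀ v ∈ S, u < v → ψ u v = i) ∧
        ∀ u ∈ S, ∀ v ∈ S, ∀ w ∈ S, u < v → v < w → f v w ≤ f u v := by
  classical
  intro k
  induction k with
  | zero =>
    intro q a ψ U hq _ hsum _ _
    refine ⟨0, hq, ∅, Finset.empty_subset _, ?_, by simp, by simp⟩
    have h0 : (2 ^ a 0 - 1) ≤ 0 :=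
      (Finset.single_le_sum (f := fun i => 2 ^ a i - 1) (fun _ _ => Nat.zero_le _)
        (Finset.mem_range.2 hq)).trans hsum
    have : a 0 < 2 ^ a 0 := Nat.lt_two_pow_self
    simp; omega
  | succ k ih =>
    intro q a ψ U hq hQ hsum hψ hU
    have hC : 1 ≤ 2 * (n + 1) ^ Q * (1 + 2 * (n + 1) ^ Q * Q ^ 2 * n) :=
      Nat.succ_le_of_lt (by positivity)
    rw [pow_succ'] at hU
    obtain ⟨i, hi, c, x, hx, y, hy, B, hBU, hB, hb⟩ :=
      qr_step n q Q _ f ψ U hn hq (by omega) (Nat.one_le_pow _ _ hC) hf hψ hU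
    rcases Nat.eq_zero_or_pos (a i) with h0 | hpos
    · exact ⟨i, hi, ∅, Finset.empty_subset _, by simp [h0], by simp, by simp⟩
    obtain ⟨m, hm⟩ : ∃ m, a i = m + 1 := ⟨a i - 1, by omega⟩
    let a' : ℕ → ℕ := fun j => if j = i ∨ j = q then m else a j
    let ψ' : ℕ → ℕ → ℕ := fun u v => if ψ u v = i ∧ c < f u v then q else ψ u v
    have hψ' : ∀ u v, ψ' u v < q + 1 := by
      intro u v
      have := hψ u v
      simp only [ψ']; split_ifs <;> omega
    have hsum' : ∑ j ∈ Finset.range (q + 1), (2 ^ a' j - 1) ≤ k := by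
      rw [Finset.sum_range_succ]
      have him : i ∈ Finset.range q := Finset.mem_range.2 hi
      rw [← Finset.add_sum_erase _ _ him] at hsum ⊢
      have he : ∑ j ∈ (Finset.range q).erase i, (2 ^ a' j - 1) =
          ∑ j ∈ (Finset.range q).erase i, (2 ^ a j - 1) := by
        refine Finset.sum_congr rfl (fun j hj => ?_)
        have h1 := Finset.ne_of_mem_erase hj
        have h2 := Finset.mem_range.1 (Finset.mem_of_mem_erase hj)
        have : a' j = a j := if_neg (by omega)
        rw [this]
      have h1 : a' i = m := if_pos (Or.inl rfl)
      have h2 : a' q = m := if_pos (Or.inr rfl)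
      rw [he, h1, h2]
      rw [hm, pow_succ] at hsum
      have : 1 ≤ 2 ^ m := Nat.one_le_two_pow
      omega
    obtain ⟨j, hj, S, hSB, hcard, hcl, hgood⟩ :=
      ih (q + 1) a' ψ' B (by omega) (by omega) hsum' hψ' hB
    by_cases hji : j = i
    · subst hji
      have hkey : ∀ u ∈ S, ∀ v ∈ S, u < v → ψ u v = j ∧ f u v ≤ c := by
        intro u hu v hv huv
        have := hcl u hu v hv huv
        simp only [ψ'] at this
        split_ifs at this with h <;> [omega; (refine ⟨this, ?_⟩; by_contra h'; exact h ⟨this, by omega⟩)]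
      have hxS : x ∉ S := fun h => lt_irrefl _ (hb x (hSB h)).1
      refine ⟨j, hi, insert x S, Finset.insert_subset hx (hSB.trans hBU), ?_, ?_, ?_⟩
      · rw [Finset.card_insert_of_notMem hxS, hcard, hm]
        simp [a']
      · intro u hu v hv huv
        rcases Finset.mem_insert.1 hu with rfl | hu1 <;> rcases Finset.mem_insert.1 hv with rfl | hv1
        · omega
        · exact (hb v (hSB hv1)).2.2.1
        · have := (hb u (hSB hu1)).1; omega
        · exact (hkey u hu1 v hv1 huv).1
      · intro u hu v hv w hw huv hvw
        have hvS : v ∈ S := by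
          rcases Finset.mem_insert.1 hv with rfl | hv
          · rcases Finset.mem_insert.1 hu with rfl | hu
            · omega
            · have := (hb u (hSB hu)).1; omega
          · exact hv
        have hwS : w ∈ S := by
          rcases Finset.mem_insert.1 hw with rfl | hw
          · have := (hb v (hSB hvS)).1; omega
          · exact hw
        rcases Finset.mem_insert.1 hu with rfl | hu
        · have h1 := (hb v (hSB hvS)).2.2.2.1
          have h2 := (hkey v hvS w hwS hvw).2
          omega
        · exact hgood u hu v hvS w hwS huv hvw
    · by_cases hjq : j = q
      · have hkey : ∀ u ∈ S, ∀ v ∈ S, u < v → ψ u v = i ∧ c < f u v := by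
          intro u hu v hv huv
          have := hcl u hu v hv huv
          simp only [ψ'] at this
          split_ifs at this with h
          · exact h
          · have := hψ u v; omega
        have hyS : y ∉ S := fun h => lt_irrefl _ (hb y (hSB h)).2.1
        refine ⟨i, hi, insert y S, Finset.insert_subset hy (hSB.trans hBU), ?_, ?_, ?_⟩
        · rw [Finset.card_insert_of_notMem hyS, hcard, hm]
          simp [a', hjq]
        · intro u hu v hv huv
          rcases Finset.mem_insert.1 hu with rfl | hu1 <;>
            rcases Finset.mem_insert.1 hv with rfl | hv1
          · omega
          · have := (hb v (hSB hv1)).2.1; omega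
          · exact (hb u (hSB hu1)).2.2.2.2.1
          · exact (hkey u hu1 v hv1 huv).1
        · intro u hu v hv w hw huv hvw
          have hvS : v ∈ S := by
            rcases Finset.mem_insert.1 hv with rfl | hv
            · rcases Finset.mem_insert.1 hw with rfl | hw
              · omega
              · have := (hb w (hSB hw)).2.1; omega
            · exact hv
          have huS : u ∈ S := by
            rcases Finset.mem_insert.1 hu with rfl | hu
            · have := (hb v (hSB hvS)).2.1; omega
            · exact hu
          rcases Finset.mem_insert.1 hw with rfl | hw
          · have h1 := (hb v (hSB hvS)).2.2.2.2.2
            have h2 := (hkey u huS v hvS huv).2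
            omega
          · exact hgood u huS v hvS w hw huv hvw
      · refine ⟨j, by omega, S, hSB.trans hBU, ?_, ?_, hgood⟩
        · rw [hcard]; exact if_neg (by omega)
        · intro u hu v hv huv
          have := hcl u hu v hv huv
          simp only [ψ'] at this
          split_ifs at this with h
          · omega
          · exact this

/-- There is a blue tight path on `k + 2` vertices ending with `u, v`. -/
def QRPath (φ : ℕ → ℕ → ℕ → Bool) : ℕ → ℕ → ℕ → Prop
  | 0, _, _ => True
  | k + 1, v, w => ∃ u, 1 ≤ u ∧ u < v ∧ QRPath φ k u v ∧ φ u v w = false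

lemma qr_path (φ : ℕ → ℕ → ℕ → Bool) (N : ℕ) : ∀ k u v, 1 ≤ u → u < v → v ≤ N → QRPath φ k u v →
    ∃ p : ℕ → ℕ, p k = u ∧ p (k + 1) = v ∧ (∀ i < k + 2, p i ∈ Finset.Icc 1 N) ∧
      (∀ i j, i < j → j < k + 2 → p i < p j) ∧
      ∀ i, i + 2 < k + 2 → φ (p i) (p (i + 1)) (p (i + 2)) = false := by
  intro k
  induction k with
  | zero =>
    intro u v hu huv hv _
    refine ⟨fun i => if i = 0 then u else v, by simp, by simp, ?_, ?_, ?_⟩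
    · intro i hi
      rw [Finset.mem_Icc]
      dsimp only
      split_ifs <;> omega
    · intro i j hij hj
      have h1 : i = 0 := by omega
      have h2 : j ≠ 0 := by omega
      simp [h1, h2, huv]
    · intro i hi; omega
  | succ k ih =>
    intro v w hv hvw hw hP
    obtain ⟨u, hu, huv, hP', hφ⟩ := hP
    obtain ⟨p, hpk, hpk1, hr, hm, hb⟩ := ih u v hu huv (by omega) hP'
    refine ⟨fun i => if i < k + 2 then p i else w, ?_, ?_, ?_, ?_, ?_⟩
    · simp [hpk1]
    · simp
    · intro i hi
      dsimp only
      split_ifs with h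
      · exact hr i h
      · rw [Finset.mem_Icc]; omega
    · intro i j hij hj
      dsimp only
      rw [if_pos (by omega)]
      split_ifs with h
      · exact hm i j hij h
      · rcases Nat.lt_or_ge i (k + 1) with h1 | h1
        · have := hm i (k + 1) h1 (by omega)
          omega
        · have : i = k + 1 := by omega
          rw [this, hpk1]; exact hvw
    · intro i hi
      dsimp only
      rw [if_pos (by omega), if_pos (by omega)]
      split_ifs with h
      · exact hb i h
      · have : i = k := by omega
        rw [this, hpk, hpk1]; exact hφ

lemma qr_numeric (s n : ℕ) (hs : 3 ≤ s) (hn : 2 ≤ n) :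
    (2 * (n + 1) ^ (2 ^ s) * (1 + 2 * (n + 1) ^ (2 ^ s) * (2 ^ s) ^ 2 * n)) ^ (2 ^ s - 1)
      ≤ n ^ (5 ^ s * s.factorial) := by
  have h1 : (n + 1) ^ (2 ^ s) ≤ n ^ (2 * 2 ^ s) := by
    rw [pow_mul]
    exact Nat.pow_le_pow_left (by nlinarith) _
  have h2 : (2 ^ s) ^ 2 ≤ n ^ (2 * s) := by
    rw [← pow_mul, mul_comm]
    exact Nat.pow_le_pow_left hn _
  set Mx := (n + 1) ^ (2 ^ s) with hMx
  have hM1 : 1 ≤ Mx := Nat.one_le_pow _ _ (by omega)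
  have h3 : 2 * Mx * (1 + 2 * Mx * (2 ^ s) ^ 2 * n) ≤ n ^ (6 * 2 ^ s) := by
    have hpos : 1 ≤ 2 * Mx * (2 ^ s) ^ 2 * n := Nat.succ_le_of_lt (by positivity)
    calc 2 * Mx * (1 + 2 * Mx * (2 ^ s) ^ 2 * n)
        ≤ 2 * Mx * (2 * Mx * (2 ^ s) ^ 2 * n + 2 * Mx * (2 ^ s) ^ 2 * n) := by gcongr
      _ = 2 * 2 * 2 * Mx * Mx * (2 ^ s) ^ 2 * n := by ring
      _ ≤ n * n * n * n ^ (2 * 2 ^ s) * n ^ (2 * 2 ^ s) * n ^ (2 * s) * n := by gcongr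
      _ = n ^ (4 * 2 ^ s + (2 * s + 4)) := by ring
      _ ≤ n ^ (6 * 2 ^ s) := by
        apply Nat.pow_le_pow_right (by omega)
        have : s + 2 ≤ 2 ^ s := by
          clear * - hs
          induction s, hs using Nat.le_induction with
          | base => norm_num
          | succ m hm ih => rw [pow_succ]; omega
        omega
  calc _ ≤ (n ^ (6 * 2 ^ s)) ^ (2 ^ s - 1) := Nat.pow_le_pow_left h3 _
    _ ≤ (n ^ (6 * 2 ^ s)) ^ (2 ^ s) :=
        Nat.pow_le_pow_right (Nat.one_le_pow _ _ (by omega)) (Nat.sub_le _ _)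
    _ = n ^ (4 ^ s * 6) := by
        rw [← pow_mul]
        congr 1
        have : (4 : ℕ) ^ s = 2 ^ s * 2 ^ s := by rw [← mul_pow]; norm_num
        rw [this]; ring
    _ ≤ n ^ (5 ^ s * s.factorial) := by
        apply Nat.pow_le_pow_right (by omega)
        have h6 : 6 ≤ s.factorial := Nat.factorial_le hs
        exact Nat.mul_le_mul (Nat.pow_le_pow_left (by norm_num) s) h6


/-- `r_3(K_s, P_n) < 2^{5^s s! (log n)^{s-1}}`: for `n ≥ 2`, every red/blue coloring
(`true` = red, `false` = blue) of the triples of `{1, ..., N}` with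
`N ≥ 2^{5^s s! (log₂ n)^{s-1}}` contains a red complete 3-uniform hypergraph on `s`
vertices or a blue tight monotone path on `n` vertices. -/
theorem quasipoly_ramsey (s n N : ℕ) (hn : 2 ≤ n)
    (hN : (2 : ℝ) ^ ((5 : ℝ) ^ s * (Nat.factorial s) * (Real.logb 2 n) ^ (s - 1)) ≤ N)
    (φ : ℕ → ℕ → ℕ → Bool) :
    (∃ S : Finset ℕ, S ⊆ Finset.Icc 1 N ∧ S.card = s ∧
      ∀ u ∈ S, ∀ v ∈ S, ∀ w ∈ S, u < v → v < w → φ u v w = true) ∨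
    (∃ v : ℕ → ℕ, (∀ i < n, v i ∈ Finset.Icc 1 N) ∧
      (∀ i j, i < j → j < n → v i < v j) ∧
      ∀ i, i + 2 < n → φ (v i) (v (i + 1)) (v (i + 2)) = false) := by
  have hL : (1 : ℝ) ≤ Real.logb 2 n := by
    rw [Real.le_logb_iff_rpow_le (by norm_num) (by positivity)]
    simpa using (by exact_mod_cast hn : (2 : ℝ) ≤ n)
  have hfac : (1 : ℝ) ≤ (5 : ℝ) ^ s * (Nat.factorial s) := by
    exact_mod_cast Nat.succ_le_of_lt (Nat.mul_pos (pow_pos (by norm_num) s) (Nat.factorial_pos s))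
  have hLp : (1 : ℝ) ≤ (Real.logb 2 n) ^ (s - 1) := one_le_pow₀ hL
  have hN2 : 2 ≤ N := by
    have h1 : (2 : ℝ) ^ (1 : ℝ) ≤
        (2 : ℝ) ^ ((5 : ℝ) ^ s * (Nat.factorial s) * (Real.logb 2 n) ^ (s - 1)) :=
      Real.rpow_le_rpow_of_exponent_le (by norm_num) (one_le_mul_of_one_le_of_one_le hfac hLp)
    rw [Real.rpow_one] at h1
    exact_mod_cast h1.trans hN
  rcases Nat.lt_or_ge s 3 with hs | hs
  · left
    refine ⟨Finset.Icc 1 s, Finset.Icc_subset_Icc_right (by omega), by simp, ?_⟩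
    intro u hu v hv w hw huv hvw
    rw [Finset.mem_Icc] at hu hv hw
    omega
  have hbig : n ^ (5 ^ s * s.factorial) ≤ N := by
    have h1 : ((n : ℝ)) ^ (5 ^ s * s.factorial) ≤ N := by
      refine le_trans ?_ hN
      have hn' : (n : ℝ) = (2 : ℝ) ^ (Real.logb 2 n) :=
        (Real.rpow_logb (by norm_num) (by norm_num) (by positivity)).symm
      conv_lhs => rw [hn']
      rw [← Real.rpow_natCast, ← Real.rpow_mul (by norm_num)]
      apply Real.rpow_le_rpow_of_exponent_le (by norm_num)
      push_cast
      rw [mul_comm]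
      exact mul_le_mul_of_nonneg_left (le_self_pow₀ hL (by omega)) (by positivity)
    exact_mod_cast h1
  classical
  by_cases hpath : ∃ u v, 1 ≤ u ∧ u < v ∧ v ≤ N ∧ QRPath φ (n - 2) u v
  · right
    obtain ⟨u, v, hu, huv, hv, hP⟩ := hpath
    obtain ⟨p, -, -, h1, h2, h3⟩ := qr_path φ N (n - 2) u v hu huv hv hP
    have he : n - 2 + 2 = n := by omega
    rw [he] at h1 h2 h3
    exact ⟨p, h1, h2, h3⟩
  · left
    let f : ℕ → ℕ → ℕ := fun u v => Nat.findGreatest (fun k => QRPath φ k u v) (n - 2)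
    have hf : ∀ u v, f u v < n := fun u v =>
      lt_of_le_of_lt (Nat.findGreatest_le (n - 2)) (by omega)
    have hk : 1 ≤ 2 ^ s := Nat.one_le_two_pow
    obtain ⟨i, hi, S, hS, hcard, -, hgood⟩ := qr_main n (2 ^ s) (by omega) f hf (2 ^ s - 1) 1
      (fun _ => s) (fun _ _ => 0) (Finset.Icc 1 N) le_rfl (by omega) (by simp) (by simp)
      (by rw [Nat.card_Icc, Nat.add_sub_cancel]; exact (qr_numeric s n hs hn).trans hbig)
    refine ⟨S, hS, hcard, ?_⟩
    intro u hu v hv w hw huv hvw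
    by_contra hred
    have hblue : φ u v w = false := by simpa using hred
    have hu1 := Finset.mem_Icc.1 (hS hu)
    have hv1 := Finset.mem_Icc.1 (hS hv)
    have hw1 := Finset.mem_Icc.1 (hS hw)
    have hle := hgood u hu v hv w hw huv hvw
    have hP : QRPath φ (f u v) u v :=
      Nat.findGreatest_spec (P := fun k => QRPath φ k u v) (Nat.zero_le _) trivial
    have hlt : f u v ≠ n - 2 := by
      intro h
      rw [h] at hP
      exact hpath ⟨u, v, hu1.1, huv, hv1.2, hP⟩
    have hle2 : f u v ≤ n - 2 := Nat.findGreatest_le (n - 2)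
    have hP2 : QRPath φ (f u v + 1) v w := ⟨u, hu1.1, huv, hP, hblue⟩
    have : f u v + 1 ≤ f v w :=
      Nat.le_findGreatest (P := fun k => QRPath φ k v w) (by omega) hP2
    omega
end
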